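/- Let F be an algebraically closed field with characteristic ≠ 2, and let t ∈ F satisfy t² + t + 1 = 0 (i.e. t is a primitive cube root of unity). Then the automorphism group of the algebra E3 with MSC [[0,0,0,1],[1,0,0,0]] consists of exactly six elements: Aut(E3) = { I, [[0,1],[1,0]], [[t,0],[0,t²]], [[t²,0],[0,t]], [[0,t],[t²,0]], [[0,t²],[t,0]] }. -/

import Mathlib

open Matrix Kronecker

variable {F : Type*}

/-- The Kronecker (tensor) product of two `2 × 2` matrices, realized as a `4 × 4` matrix;
rows/columns are indexed in row-major order by the pairs `(1,1), (1,2), (2,1), (2,2)`. -/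
def kron [CommRing F] (g h : Matrix (Fin 2) (Fin 2) F) : Matrix (Fin 4) (Fin 4) F :=
  Matrix.reindex finProdFinEquiv finProdFinEquiv (g ⊗ₖ h)

/-- Two `2`-dimensional algebras given by matrices of structure constants `A, B`
are isomorphic iff `B = g · A · (g⁻¹ ⊗ g⁻¹)` for some `g ∈ GL(2, F)`. -/
def Isomorphic [Field F] (A B : Matrix (Fin 2) (Fin 4) F) : Prop :=
  ∃ g : GL (Fin 2) F,
    B = (g : Matrix (Fin 2) (Fin 2) F) * A *
        kron ((↑(g⁻¹) : Matrix (Fin 2) (Fin 2) F)) ((↑(g⁻¹) : Matrix (Fin 2) (Fin 2) F))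

/-- The automorphism group of the algebra with MSC `E`, as a set of (invertible) `2 × 2`
matrices: `Aut(E) = {g ∈ GL(2,F) : g·E = E·(g ⊗ g)}`. -/
def Aut [Field F] (E : Matrix (Fin 2) (Fin 4) F) : Set (Matrix (Fin 2) (Fin 2) F) :=
  {g | IsUnit g ∧ g * E = E * kron g g}

/-- The derivation algebra of the algebra with MSC `E`:
`Der(E) = { D : E·(D ⊗ I + I ⊗ D) = D·E }`. -/
def Der [Field F] (E : Matrix (Fin 2) (Fin 4) F) : Set (Matrix (Fin 2) (Fin 2) F) :=
  {D | E * (kron D 1 + kron 1 D) = D * E}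

/-!
Since `e₁e₂ = 0` in `E₃`, each row of an automorphism `g` has a vanishing entry, so the invertible
matrix `g` is diagonal or antidiagonal. The products `e₁e₁ = e₂` and `e₂e₂ = e₁` make each of the
two remaining nonzero entries the square of the other, so that they are `a` and `a ^ 2` with
`a = a ^ 4`, that is, `a ^ 3 = 1`. Finally, `X ^ 3 - 1 = (X - 1) (X - t) (X - t ^ 2)`.
-/

theorem kron_fin_two {R : Type*} [CommRing R] (a b c d a' b' c' d' : R) :
    kron !![a, b; c, d] !![a', b'; c', d'] =
      !![a * a', a * b', b * a', b * b';
         a * c', a * d', b * c', b * d';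
         c * a', c * b', d * a', d * b';
         c * c', c * d', d * c', d * d'] := by
  ext i j
  fin_cases i <;> fin_cases j <;> rfl

theorem mem_Aut_fin_two_iff [Field F] {E : Matrix (Fin 2) (Fin 4) F} {a b c d : F} :
    !![a, b; c, d] ∈ Aut E ↔
      a * d - b * c ≠ 0 ∧ !![a, b; c, d] * E = E * kron !![a, b; c, d] !![a, b; c, d] := by
  rw [Aut, Set.mem_ofPred_eq, isUnit_iff_isUnit_det, isUnit_iff_ne_zero, det_fin_two_of]

/-- The matrix of structure constants of the algebra `E₃`, with basis `e₁, e₂` and products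
`e₁e₁ = e₂`, `e₂e₂ = e₁`, `e₁e₂ = e₂e₁ = 0`. -/
def E3 (R : Type*) [Zero R] [One R] : Matrix (Fin 2) (Fin 4) R :=
  !![0, 0, 0, 1; 1, 0, 0, 0]

theorem mul_E3_eq_E3_mul_kron_iff {R : Type*} [CommRing R] {a b c d : R} :
    !![a, b; c, d] * E3 R = E3 R * kron !![a, b; c, d] !![a, b; c, d] ↔
      (a * b = 0 ∧ c * d = 0) ∧ (d = a ^ 2 ∧ a = d ^ 2) ∧ (c = b ^ 2 ∧ b = c ^ 2) := by
  have mul_E3 : !![a, b; c, d] * E3 R = !![b, 0, 0, a; d, 0, 0, c] := by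
    simp [E3]
  have E3_mul_kron : E3 R * kron !![a, b; c, d] !![a, b; c, d] =
      !![c ^ 2, c * d, c * d, d ^ 2; a ^ 2, a * b, a * b, b ^ 2] := by
    simp [E3, kron_fin_two, sq, mul_comm]
  rw [mul_E3, E3_mul_kron, ← Matrix.ext_iff]
  simp only [Fin.forall_fin_succ, of_apply, cons_val', cons_val_fin_one, cons_val_zero,
    cons_val_succ, forall_const, and_self_left]
  grind

theorem diagonal_or_antidiagonal_of_mul_eq_zero {R : Type*} [NonUnitalNonAssocRing R]
    [NoZeroDivisors R] {a b c d : R} (hdet : a * d - b * c ≠ 0) (hab : a * b = 0)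
    (hcd : c * d = 0) : (b = 0 ∧ c = 0) ∨ (a = 0 ∧ d = 0) := by
  rcases mul_eq_zero.mp hab with rfl | rfl
  · have hc : c ≠ 0 := by rintro rfl; simp at hdet
    exact .inr ⟨rfl, (mul_eq_zero.mp hcd).resolve_left hc⟩
  · have hd : d ≠ 0 := by rintro rfl; simp at hdet
    exact .inl ⟨rfl, (mul_eq_zero.mp hcd).resolve_right hd⟩

theorem ne_zero_and_eq_sq_and_eq_sq_iff {M : Type*} [MonoidWithZero M] [IsLeftCancelMulZero M]
    [Nontrivial M] {x y : M} : (x ≠ 0 ∧ y = x ^ 2 ∧ x = y ^ 2) ↔ x ^ 3 = 1 ∧ y = x ^ 2 := by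
  constructor
  · rintro ⟨hx, rfl, hxy⟩
    have hx4 : x * x ^ 3 = x := calc
      x * x ^ 3 = x ^ 4 := (pow_succ' x 3).symm
      _ = (x ^ 2) ^ 2 := pow_mul x 2 2
      _ = x := hxy.symm
    exact ⟨(mul_eq_left₀ hx).mp hx4, rfl⟩
  · rintro ⟨hx3, rfl⟩
    have hx4 : (x ^ 2) ^ 2 = x := by rw [← pow_mul, pow_succ, hx3, one_mul]
    exact ⟨by rintro rfl; simp at hx3, rfl, hx4.symm⟩

theorem diagonal_mem_Aut_E3_iff [Field F] {a d : F} :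
    !![a, 0; 0, d] ∈ Aut (E3 F) ↔ a ^ 3 = 1 ∧ d = a ^ 2 := by
  rw [mem_Aut_fin_two_iff, mul_E3_eq_E3_mul_kron_iff, ← ne_zero_and_eq_sq_and_eq_sq_iff]
  simp only [mul_zero, sub_zero, ne_eq, mul_eq_zero, not_or, zero_mul, and_self,
    OfNat.ofNat_ne_zero, not_false_eq_true, zero_pow, and_true, true_and, and_congr_left_iff,
    and_iff_left_iff_imp, and_imp]
  exact fun _ had ha hd => ha (by simpa [hd] using had)

theorem antidiagonal_mem_Aut_E3_iff [Field F] {b c : F} :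
    !![0, b; c, 0] ∈ Aut (E3 F) ↔ b ^ 3 = 1 ∧ c = b ^ 2 := by
  rw [mem_Aut_fin_two_iff, mul_E3_eq_E3_mul_kron_iff, ← ne_zero_and_eq_sq_and_eq_sq_iff]
  simp only [mul_zero, zero_sub, neg_eq_zero, ne_eq, mul_eq_zero, not_or, zero_mul, and_self,
    OfNat.ofNat_ne_zero, not_false_eq_true, zero_pow, true_and, and_congr_left_iff,
    and_iff_left_iff_imp, and_imp]
  exact fun _ hbc hb hc => hb (by simpa [hc] using hbc)

theorem Aut_E3_eq_diagonal_union_antidiagonal [Field F] :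
    Aut (E3 F) =
      (fun a => !![a, 0; 0, a ^ 2]) '' {a | a ^ 3 = 1} ∪
        (fun b => !![0, b; b ^ 2, 0]) '' {b | b ^ 3 = 1} := by
  apply Set.Subset.antisymm
  · intro g hg
    obtain ⟨a, b, c, d, rfl⟩ : ∃ a b c d, g = !![a, b; c, d] := ⟨_, _, _, _, eta_fin_two g⟩
    obtain ⟨hdet, hmul⟩ := mem_Aut_fin_two_iff.mp hg
    obtain ⟨⟨hab, hcd⟩, -⟩ := mul_E3_eq_E3_mul_kron_iff.mp hmul
    rcases diagonal_or_antidiagonal_of_mul_eq_zero hdet hab hcd with ⟨rfl, rfl⟩ | ⟨rfl, rfl⟩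
    · obtain ⟨ha, rfl⟩ := diagonal_mem_Aut_E3_iff.mp hg
      exact .inl ⟨a, ha, rfl⟩
    · obtain ⟨hb, rfl⟩ := antidiagonal_mem_Aut_E3_iff.mp hg
      exact .inr ⟨b, hb, rfl⟩
  · rintro _ (⟨a, ha, rfl⟩ | ⟨b, hb, rfl⟩)
    · exact diagonal_mem_Aut_E3_iff.mpr ⟨ha, rfl⟩
    · exact antidiagonal_mem_Aut_E3_iff.mpr ⟨hb, rfl⟩

theorem setOf_pow_three_eq_one {R : Type*} [CommRing R] [NoZeroDivisors R] {t : R}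
    (ht : t ^ 2 + t + 1 = 0) : {x : R | x ^ 3 = 1} = {1, t, t ^ 2} := by
  ext x
  have factorization : x ^ 3 - 1 = (x - 1) * ((x - t) * (x - t ^ 2)) := by
    linear_combination (x ^ 2 - t * x + t - 1) * ht
  rw [Set.mem_ofPred_eq, ← sub_eq_zero, factorization]
  simp [sub_eq_zero]

theorem aut_E3_general [Field F] {t : F} (ht : t ^ 2 + t + 1 = 0) :
    Aut (!![0, 0, 0, 1; 1, 0, 0, 0] : Matrix (Fin 2) (Fin 4) F) =
      {1, !![0, 1; 1, 0], !![t, 0; 0, t ^ 2], !![t ^ 2, 0; 0, t],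
        !![0, t; t ^ 2, 0], !![0, t ^ 2; t, 0]} := by
  have ht4 : (t ^ 2) ^ 2 = t := by linear_combination (t ^ 2 - t) * ht
  calc Aut (E3 F)
    _ = (fun a => !![a, 0; 0, a ^ 2]) '' {1, t, t ^ 2} ∪
          (fun b => !![0, b; b ^ 2, 0]) '' {1, t, t ^ 2} := by
      rw [Aut_E3_eq_diagonal_union_antidiagonal, setOf_pow_three_eq_one ht]
    _ = {!![1, 0; 0, 1], !![t, 0; 0, t ^ 2], !![t ^ 2, 0; 0, t]} ∪
          {!![0, 1; 1, 0], !![0, t; t ^ 2, 0], !![0, t ^ 2; t, 0]} := by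
      simp only [Set.image_insert_eq, Set.image_singleton, one_pow, ht4]
    _ = _ := by
      rw [one_fin_two]
      ext g
      simp only [Set.mem_union, Set.mem_insert_iff, Set.mem_singleton_iff]
      tauto

theorem aut_E3 (F : Type*) [Field F] [IsAlgClosed F] (hchar : ringChar F ≠ 2)
    (t : F) (ht : t ^ 2 + t + 1 = 0) :
    Aut (!![0, 0, 0, 1; 1, 0, 0, 0] : Matrix (Fin 2) (Fin 4) F) =
      {1, !![0, 1; 1, 0], !![t, 0; 0, t ^ 2], !![t ^ 2, 0; 0, t],
        !![0, t; t ^ 2, 0], !![0, t ^ 2; t, 0]} :=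
  aut_E3_general ht
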